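/- Generic correctness of state splitting: let Fc : Set α → Set α be monotone, Fa, Sp : Set β → Set β arbitrary functions, and C : Set α → Set β → Prop a relation such that (i) C ∅ B holds for every B; (ii) for all T and B, C T B implies C (Fc T) (Fa (Sp B)); (iii) C is antitone in its second argument: if B ⊆ B' and C T B' then C T B; (iv) C is continuous in its first argument: for every monotone sequence T : ℕ → Set α and every B, if C (T i) B for all i then C (⋃ i, T i) B; (v) Sp preserves consistency: for all T and B, C T B implies C T (Sp B). Then for every A with A ⊆ Fa (Sp A), the relation C (⋃ n, Fc^[n] ∅) (Sp A) holds. -/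

import Mathlib

/-!
For a fixed `A` with `A ⊆ Fa (Sp A)`, being consistent with `A` itself is an invariant of `Fc`: one
step moves consistency with `A` to `Fa (Sp A)`, and antitonicity brings it back to `A`. It therefore
holds along the Kleene chain from `∅` and, by continuity, at its union. Splitting enters only then,
to pass from `A` to `Sp A`.
-/

open OmegaCompletePartialOrder

theorem ωSup_iterateChain_induction {D : Type*} [OmegaCompletePartialOrder D]
    (f : D →o D) {x : D} (hx : x ≤ f x) {p : D → Prop} (base : p x)
    (step : ∀ t, p t → p (f t)) (admissible : ∀ c : Chain D, (∀ n, p (c n)) → p (ωSup c)) :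
    p (ωSup (fixedPoints.iterateChain f x hx)) :=
  admissible _ fun n => Function.Iterate.rec p base step n

section Consistency

variable {D E : Type*} [OmegaCompletePartialOrder D] [OrderBot D] [Preorder E]
  {C : D → E → Prop}

theorem consistent_ωSup_iterateChain_of_le_map (f : D →o D) {F : E → E} {a : E} (ha : a ≤ F a)
    (hbot : C ⊥ a) (hstep : ∀ t b, C t b → C (f t) (F b))
    (hanti : ∀ t, Antitone (C t))
    (hcont : ∀ c : Chain D, (∀ n, C (c n) a) → C (ωSup c) a) :
    C (ωSup (fixedPoints.iterateChain f ⊥ bot_le)) a := by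
  have invariant : ∀ t, C t a → C (f t) a := fun t ht => hanti (f t) ha (hstep t a ht)
  exact ωSup_iterateChain_induction f bot_le hbot invariant hcont

theorem generic_state_splitting_correct_general (Fc : D →o D) (Fa Sp : E → E)
    (hbot : ∀ b, C ⊥ b) (hstep : ∀ t b, C t b → C (Fc t) (Fa (Sp b)))
    (hanti : ∀ t, Antitone (C t))
    (hcont : ∀ (c : Chain D) (b : E), (∀ n, C (c n) b) → C (ωSup c) b)
    (hSp : ∀ t b, C t b → C t (Sp b)) (a : E) (ha : a ≤ Fa (Sp a)) :
    C (ωSup (fixedPoints.iterateChain Fc ⊥ bot_le)) (Sp a) :=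
  hSp _ a <| consistent_ωSup_iterateChain_of_le_map Fc (F := Fa ∘ Sp) ha (hbot a) hstep hanti
    (hcont · a)

end Consistency

/-- Generic correctness of state splitting. -/
theorem generic_state_splitting_correct {α β : Type*}
    (Fc : Set α → Set α) (Fa Sp : Set β → Set β)
    (hFc : ∀ T T' : Set α, T ⊆ T' → Fc T ⊆ Fc T')
    (C : Set α → Set β → Prop)
    (hempty : ∀ B : Set β, C ∅ B)
    (hstep : ∀ (T : Set α) (B : Set β), C T B → C (Fc T) (Fa (Sp B)))
    (hanti : ∀ (T : Set α) (B B' : Set β), B ⊆ B' → C T B' → C T B)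
    (hcont : ∀ (T : ℕ → Set α), (∀ i j, i ≤ j → T i ⊆ T j) →
      ∀ B : Set β, (∀ i, C (T i) B) → C (⋃ i, T i) B)
    (hSp : ∀ (T : Set α) (B : Set β), C T B → C T (Sp B))
    (A : Set β) (hA : A ⊆ Fa (Sp A)) :
    C (⋃ n, Fc^[n] ∅) (Sp A) :=
  generic_state_splitting_correct_general ⟨Fc, hFc⟩ Fa Sp hempty hstep
    (fun T B B' => hanti T B B') (fun c => hcont c fun _ _ h => c.monotone h) hSp A hA
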